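/- Let R be a commutative ring, C an R-module, and I_C = { s ∈ R : C is an s-contramodule }. Then I_C is an ideal of R; moreover I_C is a radical ideal (if sⁿ ∈ I_C for some n ≥ 1, then s ∈ I_C). -/

import Mathlib

open CategoryTheory Opposite

/-- `C` is an `s`-contramodule over the commutative ring `R`:
`Hom_R(R[s⁻¹],C) = 0 = Ext¹_R(R[s⁻¹],C)`. -/
def IsContramodule (R : Type) [CommRing R] (s : R) (C : Type) [AddCommGroup C]
    [Module R C] : Prop :=
  Subsingleton (Localization.Away s →ₗ[R] C) ∧
    Subsingleton (((Ext R (ModuleCat R) 1).obj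
      (op (ModuleCat.of R (Localization.Away s)))).obj (ModuleCat.of R C))

namespace ContraAux

section Ext

variable {R : Type} [CommRing R]

lemma ext_iff_resolution {X : ModuleCat.{0} R} (P : ProjectiveResolution X) (Y : ModuleCat.{0} R) :
    Subsingleton (((Ext R (ModuleCat R) 1).obj (op X)).obj Y) ↔
      ∀ f : P.complex.X 1 ⟶ Y, P.complex.d 2 1 ≫ f = 0 → ∃ g, P.complex.d 1 0 ≫ g = f := by
  rw [← ModuleCat.isZero_iff_subsingleton, (P.isoExt 1 Y).isZero_iff,
    ← HomologicalComplex.exactAt_iff_isZero_homology,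
    HomologicalComplex.exactAt_iff' _ 0 1 2 (by simp) (by simp), ShortComplex.moduleCat_exact_iff]
  exact Iff.rfl

lemma ext_iff_ses {X F K : ModuleCat.{0} R} (Y : ModuleCat.{0} R) [Projective F] [Projective K]
    (i : K ⟶ F) (q : F ⟶ X) [Mono i] [Epi q] (w : i ≫ q = 0)
    (hex : (ShortComplex.mk i q w).Exact) :
    Subsingleton (((Ext R (ModuleCat R) 1).obj (op X)).obj Y) ↔
      ∀ k : K ⟶ Y, ∃ g : F ⟶ Y, i ≫ g = k := by
  let P := projectiveResolution X
  rw [ext_iff_resolution P]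
  let d := P.complex.d 1 0
  let dtwo := P.complex.d 2 1
  let π : P.complex.X 0 ⟶ X := P.π.f 0
  have hdd : dtwo ≫ d = 0 := P.complex.d_comp_d 2 1 0
  have hdπ : d ≫ π = 0 := P.complex_d_comp_π_f_zero
  have : Epi π := inferInstanceAs (Epi (P.π.f 0))
  have h0 : (ShortComplex.mk d π hdπ).Exact := P.exact₀
  have h1 : (ShortComplex.mk dtwo d hdd).Exact := P.exact_succ 0
  have : Projective (P.complex.X 0) := P.projective 0
  have : Projective (P.complex.X 1) := P.projective 1
  -- comparison maps
  obtain ⟨φ, hφ⟩ : ∃ φ : P.complex.X 0 ⟶ F, φ ≫ q = π := ⟨_, Projective.factorThru_comp π q⟩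
  obtain ⟨χ, hχ⟩ : ∃ χ : F ⟶ P.complex.X 0, χ ≫ π = q := ⟨_, Projective.factorThru_comp q π⟩
  obtain ⟨ψ, hψ⟩ : ∃ ψ : P.complex.X 1 ⟶ K, ψ ≫ i = d ≫ φ :=
    ⟨hex.liftFromProjective (d ≫ φ) (by simp [hφ, hdπ]), hex.liftFromProjective_comp _ _⟩
  have hψa : ∀ {Z : ModuleCat.{0} R} (h : F ⟶ Z), ψ ≫ i ≫ h = d ≫ φ ≫ h := fun h => by
    rw [← Category.assoc, hψ, Category.assoc]
  obtain ⟨θ, hθ⟩ : ∃ θ : K ⟶ P.complex.X 1, θ ≫ d = i ≫ χ :=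
    ⟨h0.liftFromProjective (i ≫ χ) (by simp [hχ, w]), h0.liftFromProjective_comp _ _⟩
  constructor
  · intro H k
    obtain ⟨g, hg⟩ := H (ψ ≫ k) (by
      have : dtwo ≫ ψ = 0 := by
        rw [← cancel_mono i, Category.assoc, hψ, ← Category.assoc, hdd]; simp
      change dtwo ≫ ψ ≫ k = 0
      rw [← Category.assoc, this]; simp)
    change d ≫ g = ψ ≫ k at hg
    obtain ⟨h, hh⟩ : ∃ h : F ⟶ K, h ≫ i = 𝟙 F - χ ≫ φ :=
      ⟨hex.liftFromProjective (𝟙 F - χ ≫ φ) (by simp [hφ, hχ]), hex.liftFromProjective_comp _ _⟩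
    have e1 : i ≫ h = 𝟙 K - θ ≫ ψ := by
      rw [← cancel_mono i, Category.assoc, hh, Preadditive.sub_comp, Category.assoc, hψ,
        ← Category.assoc θ, hθ]
      simp
    refine ⟨χ ≫ g + h ≫ k, ?_⟩
    rw [Preadditive.comp_add, ← Category.assoc, ← hθ, Category.assoc, hg, ← Category.assoc i, e1]
    simp
  · intro H f hf
    change dtwo ≫ f = 0 at hf
    obtain ⟨e, he⟩ := H (θ ≫ f)
    obtain ⟨u, hu⟩ : ∃ u : P.complex.X 0 ⟶ P.complex.X 1, u ≫ d = 𝟙 _ - φ ≫ χ :=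
      ⟨h0.liftFromProjective (𝟙 _ - φ ≫ χ) (by simp [hφ, hχ]), h0.liftFromProjective_comp _ _⟩
    obtain ⟨v, hv⟩ : ∃ v : P.complex.X 1 ⟶ P.complex.X 2, v ≫ dtwo = d ≫ u - 𝟙 _ + ψ ≫ θ :=
      ⟨h1.liftFromProjective (d ≫ u - 𝟙 _ + ψ ≫ θ) (by
        simp only [Preadditive.add_comp, Preadditive.sub_comp, Category.assoc, hu, hθ,
          Preadditive.comp_sub, ← hψa]
        simp), h1.liftFromProjective_comp _ _⟩
    refine ⟨φ ≫ e + u ≫ f, ?_⟩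
    change d ≫ _ = _
    have e2 : (v ≫ dtwo) ≫ f = 0 := by rw [Category.assoc, hf]; simp
    rw [hv] at e2
    simp only [Preadditive.add_comp, Preadditive.sub_comp, Category.assoc, Category.id_comp] at e2
    rw [Preadditive.comp_add, ← hψa, he, ← sub_eq_zero, ← e2]
    abel

end Ext

section Tel

variable {R : Type} [CommRing R] (s : R)

noncomputable def telI : (ℕ →₀ R) →ₗ[R] (ℕ →₀ R) :=
  Finsupp.llift (ℕ →₀ R) R R ℕ (fun n => Finsupp.single n 1 - s • Finsupp.single (n + 1) 1)

noncomputable def telQ : (ℕ →₀ R) →ₗ[R] Localization.Away s :=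
  Finsupp.llift (Localization.Away s) R R ℕ (fun n => IsLocalization.Away.invSelf s ^ n)

lemma telI_single (n : ℕ) : telI s (Finsupp.single n 1) =
    Finsupp.single n 1 - s • Finsupp.single (n + 1) 1 := by
  simp [telI]

lemma telQ_single (n : ℕ) : telQ s (Finsupp.single n 1) =
    IsLocalization.Away.invSelf s ^ n := by
  simp [telQ]

lemma s_smul_inv (n : ℕ) : s • (IsLocalization.Away.invSelf s : Localization.Away s) ^ (n + 1) =
    IsLocalization.Away.invSelf s ^ n := by
  rw [Algebra.smul_def, pow_succ', ← mul_assoc, IsLocalization.Away.mul_invSelf, one_mul]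

lemma telQ_comp_telI : telQ s ∘ₗ telI s = 0 := by
  ext n
  simp only [LinearMap.comp_apply, Finsupp.lsingle_apply, telI_single, map_sub, map_smul,
    telQ_single, s_smul_inv]
  simp

lemma telI_coeff_zero (x : ℕ →₀ R) : telI s x 0 = x 0 := by
  have : Finsupp.lapply 0 ∘ₗ telI s = Finsupp.lapply (R := R) (M := R) 0 := by
    ext n
    simp [telI_single, Finsupp.single_apply]
  exact LinearMap.congr_fun this x

lemma telI_coeff_succ (x : ℕ →₀ R) (m : ℕ) : telI s x (m + 1) = x (m + 1) - s * x m := by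
  have : Finsupp.lapply (m + 1) ∘ₗ telI s =
      Finsupp.lapply (R := R) (M := R) (m + 1) - s • Finsupp.lapply m := by
    ext n
    simp [telI_single, Finsupp.single_apply]
  exact LinearMap.congr_fun this x

lemma telI_injective : Function.Injective (telI s) := by
  rw [injective_iff_map_eq_zero]
  intro x hx
  ext n
  induction n with
  | zero => rw [← telI_coeff_zero s, hx]
  | succ n ih =>
    have := telI_coeff_succ s x n
    rw [hx, ih] at this
    simpa using this.symm

lemma telQ_surjective : Function.Surjective (telQ s) := by
  intro z
  obtain ⟨n, a, h⟩ := IsLocalization.Away.surj s z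
  refine ⟨a • Finsupp.single n 1, ?_⟩
  rw [map_smul, telQ_single, Algebra.smul_def, ← h, mul_assoc, ← mul_pow,
    IsLocalization.Away.mul_invSelf, one_pow, mul_one]

lemma shift_mem (n k : ℕ) :
    (Finsupp.single n 1 - s ^ k • Finsupp.single (n + k) 1 : ℕ →₀ R) ∈ LinearMap.range (telI s) := by
  induction k with
  | zero => simp
  | succ k ih =>
    have := add_mem ih (Submodule.smul_mem _ (s ^ k)
      (LinearMap.mem_range_self (telI s) (Finsupp.single (n + k) 1)))
    rw [telI_single, smul_sub, smul_smul, ← pow_succ, sub_add_sub_cancel] at this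
    exact this

lemma reduce (x : ℕ →₀ R) :
    ∃ (N : ℕ) (c : R), x - c • Finsupp.single N 1 ∈ LinearMap.range (telI s) := by
  induction x using Finsupp.induction_linear with
  | zero => exact ⟨0, 0, by simp⟩
  | single n r => exact ⟨n, r, by simp⟩
  | add x y hx hy =>
    obtain ⟨N, c, h⟩ := hx
    obtain ⟨M, c', h'⟩ := hy
    refine ⟨N + M, c * s ^ M + c' * s ^ N, ?_⟩
    have h1 := Submodule.smul_mem _ c (shift_mem s N M)
    have h2 := Submodule.smul_mem _ c' (shift_mem s M N)
    rw [add_comm M N] at h2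
    have := add_mem (add_mem h h') (add_mem h1 h2)
    convert this using 1
    module

lemma tel_exact : LinearMap.ker (telQ s) ≤ LinearMap.range (telI s) := by
  intro x hx
  rw [LinearMap.mem_ker] at hx
  obtain ⟨N, c, h⟩ := reduce s x
  have hc : telQ s (c • Finsupp.single N 1) = 0 := by
    obtain ⟨y, hy⟩ := h
    have := LinearMap.congr_fun (telQ_comp_telI s) y
    rw [LinearMap.comp_apply, hy, map_sub, hx] at this
    simpa using this
  rw [map_smul, telQ_single, Algebra.smul_def] at hc
  have hc' : algebraMap R (Localization.Away s) c = algebraMap R (Localization.Away s) 0 := by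
    have e : (algebraMap R (Localization.Away s) s * IsLocalization.Away.invSelf s) ^ N = 1 := by
      rw [IsLocalization.Away.mul_invSelf, one_pow]
    rw [map_zero]
    calc _ = (algebraMap R (Localization.Away s) c * IsLocalization.Away.invSelf s ^ N) *
          algebraMap R (Localization.Away s) s ^ N := by
            rw [mul_assoc, ← mul_pow, mul_comm (IsLocalization.Away.invSelf s),
              IsLocalization.Away.mul_invSelf, one_pow, mul_one]
      _ = 0 := by rw [hc, zero_mul]
  obtain ⟨k, hk⟩ := IsLocalization.Away.exists_of_eq s hc'
  have h1 := Submodule.smul_mem _ c (shift_mem s N k)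
  rw [smul_sub, smul_smul, mul_comm, hk, mul_zero, zero_smul, sub_zero] at h1
  have := add_mem h h1
  simpa using this

end Tel

section Main

variable {R : Type} [CommRing R] {C : Type} [AddCommGroup C] [Module R C]

/-- left shift of sequences -/
def sh (a : ℕ → C) : ℕ → C := fun n => a (n + 1)

/-- existence of an infinite summation operation `∑ sⁿ aₙ` -/
def HasSummation (R : Type) [CommRing R] (s : R) (C : Type) [AddCommGroup C] [Module R C] : Prop :=
  ∃ L : (ℕ → C) →ₗ[R] C, ∀ a, L a = a 0 + s • L (sh a)

/-- the telescope operator -/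
def T (R : Type) [CommRing R] (s : R) (C : Type) [AddCommGroup C] [Module R C] :
    (ℕ → C) →ₗ[R] (ℕ → C) where
  toFun b n := b n - s • b (n + 1)
  map_add' x y := by ext n; simp only [Pi.add_apply]; module
  map_smul' r x := by ext n; simp only [Pi.smul_apply, RingHom.id_apply]; module

lemma hasSummation_iff (s : R) : HasSummation R s C ↔ Function.Bijective (T R s C) := by
  constructor
  · rintro ⟨L, hL⟩
    constructor
    · rw [injective_iff_map_eq_zero]
      have key : ∀ b, T R s C b = 0 → b 0 = 0 := by
        intro b hb
        have h1 : b = s • sh b := by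
          ext n
          exact sub_eq_zero.1 (congrFun hb n)
        have h2 := hL b
        rw [← map_smul, ← h1] at h2
        simpa using h2
      intro b hb
      ext n
      have := key (fun m => b (n + m)) (by ext m; exact congrFun hb (n + m))
      simpa using this
    · intro a
      refine ⟨fun k => L (fun n => a (k + n)), ?_⟩
      ext k
      change L (fun n => a (k + n)) - s • L (fun n => a (k + 1 + n)) = a k
      rw [hL]
      have : sh (fun n => a (k + n)) = fun n => a (k + 1 + n) := by
        ext n; simp only [sh]; congr 1; omega
      rw [this]; simp
  · intro h
    let e := LinearEquiv.ofBijective (T R s C) h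
    refine ⟨LinearMap.proj 0 ∘ₗ e.symm.toLinearMap, fun a => ?_⟩
    obtain ⟨b, rfl⟩ := h.2 a
    have e1 : e.symm (T R s C b) = b := e.symm_apply_apply b
    have e2 : e.symm (sh (T R s C b)) = sh b := e.symm_apply_apply (sh b)
    simp only [LinearMap.comp_apply, LinearEquiv.coe_coe, e1, e2, LinearMap.proj_apply]
    simp [T, sh]

lemma ext_tel_iff (s : R) : Subsingleton (((Ext R (ModuleCat R) 1).obj
      (op (ModuleCat.of R (Localization.Away s)))).obj (ModuleCat.of R C)) ↔
    ∀ k : (ℕ →₀ R) →ₗ[R] C, ∃ g : (ℕ →₀ R) →ₗ[R] C, g ∘ₗ telI s = k := by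
  have : Projective (ModuleCat.of R (ℕ →₀ R)) :=
    (IsProjective.iff_projective (R := R) (ℕ →₀ R)).1 inferInstance
  have : Mono (ModuleCat.ofHom (telI s)) := (ModuleCat.mono_iff_injective _).2 (telI_injective s)
  have : Epi (ModuleCat.ofHom (telQ s)) := (ModuleCat.epi_iff_surjective _).2 (telQ_surjective s)
  rw [ext_iff_ses (ModuleCat.of R C) (ModuleCat.ofHom (telI s)) (ModuleCat.ofHom (telQ s))
    (by rw [← ModuleCat.ofHom_comp, telQ_comp_telI]; rfl)
    (by
      rw [ShortComplex.moduleCat_exact_iff_ker_sub_range]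
      exact tel_exact s)]
  constructor
  · intro H k
    obtain ⟨g, hg⟩ := H (ModuleCat.ofHom k)
    exact ⟨g.hom, congrArg ModuleCat.Hom.hom hg⟩
  · intro H k
    obtain ⟨g, hg⟩ := H k.hom
    exact ⟨ModuleCat.ofHom g, ModuleCat.hom_ext hg⟩

lemma isContramodule_iff (s : R) : IsContramodule R s C ↔ HasSummation R s C := by
  rw [hasSummation_iff, IsContramodule, ext_tel_iff]
  have hT : ∀ g : (ℕ →₀ R) →ₗ[R] C, ∀ n, T R s C (fun n => g (Finsupp.single n 1)) n =
      (g ∘ₗ telI s) (Finsupp.single n 1) := by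
    intro g n
    simp only [T, LinearMap.coe_mk, AddHom.coe_mk, LinearMap.comp_apply, telI_single, map_sub, map_smul]
  have hlift : ∀ b : ℕ → C, ∃ g : (ℕ →₀ R) →ₗ[R] C, ∀ n, g (Finsupp.single n 1) = b n :=
    fun b => ⟨Finsupp.llift C R R ℕ b, fun n => by simp⟩
  constructor
  · rintro ⟨h0, h1⟩
    constructor
    · rw [injective_iff_map_eq_zero]
      intro b hb
      obtain ⟨g, hg⟩ := hlift b
      obtain rfl : (fun n => g (Finsupp.single n 1)) = b := funext hg
      have hg0 : g ∘ₗ telI s = 0 := by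
        ext n
        have := hT g n
        rw [hb] at this
        simpa using this.symm
      let e := (telQ s).quotKerEquivOfSurjective (telQ_surjective s)
      let g' := (LinearMap.ker (telQ s)).liftQ g (by
        intro x hx
        obtain ⟨y, rfl⟩ := tel_exact s hx
        exact LinearMap.congr_fun hg0 y)
      have hz : g' ∘ₗ e.symm.toLinearMap = 0 := Subsingleton.elim _ _
      ext n
      have := LinearMap.congr_fun hz (e (Submodule.Quotient.mk (Finsupp.single n 1)))
      simpa [g'] using this
    · intro a
      obtain ⟨k, hk⟩ := hlift a
      obtain ⟨g, hg⟩ := h1 k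
      refine ⟨fun n => g (Finsupp.single n 1), ?_⟩
      ext n
      rw [hT, hg, hk]
  · rintro ⟨hi, hs⟩
    constructor
    · refine ⟨fun f g => ?_⟩
      have : f ∘ₗ telQ s = g ∘ₗ telQ s := by
        have h : ∀ f : Localization.Away s →ₗ[R] C,
            T R s C (fun n => (f ∘ₗ telQ s) (Finsupp.single n 1)) = 0 := by
          intro f
          ext n
          rw [hT, LinearMap.comp_assoc, telQ_comp_telI]
          simp
        have h2 := hi ((h f).trans (h g).symm)
        ext n
        exact congrFun h2 n
      ext z
      obtain ⟨x, rfl⟩ := telQ_surjective s z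
      exact LinearMap.congr_fun this x
    · intro k
      obtain ⟨b, hb⟩ := hs (fun n => k (Finsupp.single n 1))
      obtain ⟨g, hg⟩ := hlift b
      obtain rfl : (fun n => g (Finsupp.single n 1)) = b := funext hg
      refine ⟨g, ?_⟩
      ext n
      have := congrFun hb n
      rw [hT] at this
      exact this

lemma hasSummation_zero : HasSummation R 0 C := ⟨LinearMap.proj 0, fun a => by simp⟩

lemma hasSummation_mul (r s : R) (h : HasSummation R s C) : HasSummation R (r * s) C := by
  obtain ⟨L, hL⟩ := h
  refine ⟨L ∘ₗ LinearMap.pi (fun n => r ^ n • LinearMap.proj n), fun a => ?_⟩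
  simp only [LinearMap.comp_apply]
  rw [hL, mul_comm, mul_smul, ← map_smul L r]
  congr 1
  · simp
  · congr 2
    ext n
    simp [sh, pow_succ', mul_smul]

lemma hasSummation_pow (s : R) (m : ℕ) (h : HasSummation R (s ^ m) C) : HasSummation R s C := by
  obtain ⟨L, hL⟩ := h
  refine ⟨L ∘ₗ LinearMap.pi (fun n => ∑ i ∈ Finset.range m, s ^ i • LinearMap.proj (m * n + i)),
    fun a => ?_⟩
  simp only [LinearMap.comp_apply]
  rw [← sub_eq_iff_eq_add, ← map_smul, ← map_sub]
  have h2 := hL (fun n => a (m * n))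
  rw [← sub_eq_iff_eq_add, ← map_smul, ← map_sub] at h2
  rw [mul_zero] at h2
  rw [← h2]
  congr 1
  ext n
  simp only [Pi.sub_apply, Pi.smul_apply, LinearMap.pi_apply, LinearMap.sum_apply,
    LinearMap.smul_apply, LinearMap.proj_apply, sh, Finset.smul_sum, smul_smul, ← pow_succ']
  have h3 := Finset.sum_range_sub' (fun i => s ^ i • a (m * n + i)) m
  rw [Finset.sum_sub_distrib] at h3
  simpa [mul_add, add_assoc] using h3

lemma hasSummation_add (s t : R) (hs : HasSummation R s C) (ht : HasSummation R t C) :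
    HasSummation R (s + t) C := by
  obtain ⟨L, hL⟩ := hs
  obtain ⟨M, hM⟩ := ht
  let B : ℕ → (ℕ → C) →ₗ[R] (ℕ → C) := fun i =>
    LinearMap.pi (fun j => ((i + j).choose i : R) • LinearMap.proj (i + j))
  have hB : ∀ i a j, B i a j = ((i + j).choose i : R) • a (i + j) := fun i a j => by simp [B]
  refine ⟨L ∘ₗ LinearMap.pi (fun i => M ∘ₗ B i), fun a => ?_⟩
  have hU : ∀ a, (L ∘ₗ LinearMap.pi (fun i => M ∘ₗ B i)) a = L (fun i => M (B i a)) := fun a => rfl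
  rw [hU, hU]
  -- `A i` : the part of `B i a` with `i` lowered
  let A : ℕ → C := fun i => Nat.casesOn i 0 (fun i => M (B i (sh a)))
  have hA : L A = s • L (fun i => M (B i (sh a))) := by
    rw [hL A]; simp [A]; rfl
  let E : ℕ → C := fun i => Nat.casesOn i (a 0) (fun _ => 0)
  have hE : L E = a 0 := by
    have : sh E = 0 := rfl
    rw [hL E, this]; simp [E]
  have key : (fun i => M (B i a)) = E + A + t • (fun i => M (B i (sh a))) := by
    ext i
    cases i with
    | zero =>
      have : sh (B 0 a) = B 0 (sh a) := by
        ext j; simp [sh, hB]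
      simp only [Pi.add_apply, Pi.smul_apply]
      rw [hM, this, hB]
      simp [E, A]
    | succ i =>
      simp only [Pi.add_apply, Pi.smul_apply]
      have e : B (i + 1) a = B i (sh a) + (B (i + 1) a - B i (sh a)) := by abel
      have e2 : sh (B (i + 1) a - B i (sh a)) = B (i + 1) (sh a) := by
        ext j
        simp only [sh, Pi.sub_apply, hB]
        have h1 : i + (j + 1) + 1 = i + 1 + (j + 1) := by omega
        have h2 : i + 1 + j + 1 = i + 1 + (j + 1) := by omega
        have h3 : i + (j + 1) = i + 1 + j := by omega
        rw [h1, h2, ← sub_smul, ← h1, Nat.choose_succ_succ, h3]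
        push_cast
        congr 1
        ring
      rw [e, map_add, hM (B (i + 1) a - B i (sh a)), e2]
      simp [E, A, hB, sh]
  rw [key, map_add, map_add, hA, hE, map_smul, add_smul, add_assoc]

end Main

end ContraAux

/-- For a commutative ring `R` and an `R`-module `C`, the set
`I_C = { s ∈ R : C is an s-contramodule }` is a radical ideal of `R`. -/
theorem exists_radical_ideal_of_contramodule_elements
    (R : Type) [CommRing R] (C : Type) [AddCommGroup C] [Module R C] :
    ∃ I : Ideal R, (∀ s : R, s ∈ I ↔ IsContramodule R s C) ∧ I.IsRadical := by
  refine ⟨{ carrier := {s | ContraAux.HasSummation R s C}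
            add_mem' := fun {s t} hs ht => ContraAux.hasSummation_add s t hs ht
            zero_mem' := ContraAux.hasSummation_zero
            smul_mem' := fun r s hs => ContraAux.hasSummation_mul r s hs },
    fun s => (ContraAux.isContramodule_iff s).symm, ?_⟩
  rintro s ⟨n, hn⟩
  exact ContraAux.hasSummation_pow s n hn
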